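/- arXiv:1404.3854 — 2 statements merged into one kernel-verified Lean document; each statement's English description precedes it below -/
import Mathlib

section
/- Fix F ∈ ℍ_V, so V_ℂ = F ⊕ F̄. Then: (i) every F' ∈ ℍ_V intersects F̄ trivially, and hence is the graph of a unique ℂ-linear map φ : F → F̄ with respect to the decomposition V_ℂ = F ⊕ F̄; (ii) for a ℂ-linear map φ : F → F̄, the graph {z + φ(z) : z ∈ F} is totally isotropic for a_ℂ if and only if the bilinear map Φ : F × F → ℂ, Φ(v,v') = a_ℂ(v, φ(v')), is symmetric. -/
open TensorProduct Module

noncomputable section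

instance : RingHomSurjective (starRingEnd ℂ) :=
  ⟨fun z => ⟨(starRingEnd ℂ) z, by simp⟩⟩

variable {V : Type*} [AddCommGroup V] [Module ℝ V]

/-- The conjugation of `V_ℂ = ℂ ⊗[ℝ] V` induced by complex conjugation on `ℂ`. -/
def conjC (V : Type*) [AddCommGroup V] [Module ℝ V] :
    (ℂ ⊗[ℝ] V) →ₛₗ[starRingEnd ℂ] (ℂ ⊗[ℝ] V) where
  toFun := TensorProduct.map Complex.conjAe.toLinearMap LinearMap.id
  map_add' x y := map_add _ x y
  map_smul' c x := by
    induction x using TensorProduct.induction_on with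
    | zero => simp
    | tmul z v =>
        simp [TensorProduct.smul_tmul', smul_eq_mul, map_mul]
    | add x y hx hy => simp_all [smul_add]

/-- The hermitian form `h(v,w) = √-1 ⬝ a_ℂ(v, conj w)` associated to a real
symplectic form `a`. -/
def hermSymp (a : LinearMap.BilinForm ℝ V) (v w : ℂ ⊗[ℝ] V) : ℂ :=
  Complex.I * (LinearMap.BilinForm.baseChange ℂ a) v (conjC V w)

/-- Membership in `ℍ_V`: a `g`-dimensional complex subspace of `V_ℂ` that is totally
isotropic for `a_ℂ` and on which `h` is positive definite. -/
def InHV (a : LinearMap.BilinForm ℝ V) (g : ℕ) (F : Submodule ℂ (ℂ ⊗[ℝ] V)) : Prop :=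
  Module.finrank ℂ F = g ∧
  (∀ v ∈ F, ∀ w ∈ F, (LinearMap.BilinForm.baseChange ℂ a) v w = 0) ∧
  (∀ v ∈ F, v ≠ 0 → ∃ r : ℝ, 0 < r ∧ hermSymp a v v = r)

theorem conjC_conjC (x : ℂ ⊗[ℝ] V) : conjC V (conjC V x) = x := by
  induction x using TensorProduct.induction_on with
  | zero => simp
  | tmul z v => simp [conjC]
  | add x y hx hy => rw [map_add, map_add, hx, hy]

theorem baseChange_skew (a : LinearMap.BilinForm ℝ V) (halt : LinearMap.IsAlt a)
    (x y : ℂ ⊗[ℝ] V) :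
    (LinearMap.BilinForm.baseChange ℂ a) x y = -(LinearMap.BilinForm.baseChange ℂ a) y x := by
  induction x using TensorProduct.induction_on with
  | zero => simp
  | add x x' hx hx' => rw [map_add, LinearMap.add_apply, hx, hx', map_add]; ring
  | tmul z v =>
    induction y using TensorProduct.induction_on with
    | zero => simp
    | add x x' hx hx' => rw [map_add, hx, hx', map_add, LinearMap.add_apply]; ring
    | tmul w u =>
      rw [LinearMap.BilinForm.baseChange_tmul, LinearMap.BilinForm.baseChange_tmul,
        ← halt.neg u v, mul_comm, neg_smul]

theorem baseChange_conj (a : LinearMap.BilinForm ℝ V) (x y : ℂ ⊗[ℝ] V) :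
    (LinearMap.BilinForm.baseChange ℂ a) (conjC V x) (conjC V y) =
      (starRingEnd ℂ) ((LinearMap.BilinForm.baseChange ℂ a) x y) := by
  induction x using TensorProduct.induction_on with
  | zero => simp
  | add x x' hx hx' => simp only [map_add, LinearMap.add_apply, hx, hx']
  | tmul z v =>
    induction y using TensorProduct.induction_on with
    | zero => simp
    | add x x' hx hx' => simp only [map_add, hx, hx']
    | tmul w u =>
      have h (z : ℂ) (v : V) : conjC V (z ⊗ₜ v) = (starRingEnd ℂ z) ⊗ₜ v := rfl
      rw [h, h, LinearMap.BilinForm.baseChange_tmul, LinearMap.BilinForm.baseChange_tmul]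
      simp

theorem finrank_map_conjC (F : Submodule ℂ (ℂ ⊗[ℝ] V)) :
    Module.finrank ℂ (Submodule.map (conjC V) F) = Module.finrank ℂ F := by
  let j : F ≃+ (Submodule.map (conjC V) F) :=
    { toFun := fun x => ⟨conjC V x, Submodule.mem_map_of_mem x.2⟩
      invFun := fun y => ⟨conjC V y, by
        obtain ⟨x, hx, hxy⟩ := y.2
        rw [← hxy, conjC_conjC]; exact hx⟩
      left_inv := fun x => Subtype.ext (conjC_conjC _)
      right_inv := fun x => Subtype.ext (conjC_conjC _)
      map_add' := fun x y => Subtype.ext (map_add _ _ _) }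
  have := rank_eq_of_equiv_equiv (starRingEnd ℂ) j (starRingAut (R := ℂ)).bijective
    (fun r m => Subtype.ext ((conjC V).map_smulₛₗ r m))
  unfold Module.finrank
  rw [this]

theorem inf_conj_eq_bot (a : LinearMap.BilinForm ℝ V) (halt : LinearMap.IsAlt a) (g : ℕ)
    (F F' : Submodule ℂ (ℂ ⊗[ℝ] V)) (hF : InHV a g F) (hF' : InHV a g F') :
    F' ⊓ Submodule.map (conjC V) F = ⊥ := by
  rw [eq_bot_iff]
  rintro w ⟨hw, v, hv, rfl⟩
  rw [Submodule.mem_bot]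
  by_contra hne
  have hv0 : v ≠ 0 := by
    rintro rfl
    exact hne (map_zero _)
  obtain ⟨r, hr, h1⟩ := hF.2.2 v hv hv0
  obtain ⟨s, hs, h2⟩ := hF'.2.2 _ hw hne
  unfold hermSymp at h1 h2
  rw [conjC_conjC, baseChange_skew a halt, mul_neg, h1] at h2
  have : -r = s := by exact_mod_cast h2
  linarith

/-- fix `F ∈ ℍ_V` (so `V_ℂ = F ⊕ F̄`).  (i) Every `F' ∈ ℍ_V` intersects `F̄`
trivially and is the graph of a unique `ℂ`-linear map `φ : F → F̄`; (ii) the graph of a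
`ℂ`-linear `φ : F → F̄` is totally isotropic for `a_ℂ` iff the bilinear map
`Φ(v,v') = a_ℂ(v, φ(v'))` is symmetric. -/
theorem graphs_over_F_and_isotropy
    [FiniteDimensional ℝ V] (g : ℕ) (hg : 1 ≤ g)
    (hdim : Module.finrank ℝ V = 2 * g)
    (a : LinearMap.BilinForm ℝ V)
    (halt : LinearMap.IsAlt a) (hnd : LinearMap.BilinForm.Nondegenerate a)
    (F : Submodule ℂ (ℂ ⊗[ℝ] V)) (hF : InHV a g F) :
    (∀ F' : Submodule ℂ (ℂ ⊗[ℝ] V), InHV a g F' →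
      F' ⊓ Submodule.map (conjC V) F = ⊥ ∧
      ∃! φ : F →ₗ[ℂ] (Submodule.map (conjC V) F),
        ∀ w : ℂ ⊗[ℝ] V, w ∈ F' ↔
          ∃ z : F, w = (z : ℂ ⊗[ℝ] V) + (↑(φ z) : ℂ ⊗[ℝ] V)) ∧
    (∀ φ : F →ₗ[ℂ] (Submodule.map (conjC V) F),
      (∀ z z' : F,
        (LinearMap.BilinForm.baseChange ℂ a)
          ((z : ℂ ⊗[ℝ] V) + (↑(φ z) : ℂ ⊗[ℝ] V))
          ((z' : ℂ ⊗[ℝ] V) + (↑(φ z') : ℂ ⊗[ℝ] V)) = 0) ↔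
      (∀ v v' : F,
        (LinearMap.BilinForm.baseChange ℂ a) (v : ℂ ⊗[ℝ] V) (↑(φ v') : ℂ ⊗[ℝ] V) =
        (LinearMap.BilinForm.baseChange ℂ a) (v' : ℂ ⊗[ℝ] V) (↑(φ v) : ℂ ⊗[ℝ] V))) := by
  have hC : Module.finrank ℂ (ℂ ⊗[ℝ] V) = 2 * g := by
    rw [Module.finrank_baseChange, hdim]
  have hcompl : ∀ F' : Submodule ℂ (ℂ ⊗[ℝ] V), InHV a g F' →
      IsCompl F' (Submodule.map (conjC V) F) := by
    intro F' hF'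
    rw [Submodule.isCompl_iff_disjoint, disjoint_iff]
    · exact inf_conj_eq_bot a halt g F F' hF hF'
    · rw [hC, finrank_map_conjC, hF.1, hF'.1]; omega
  refine ⟨fun F' hF' => ⟨inf_conj_eq_bot a halt g F F' hF hF', ?_⟩, ?_⟩
  · have hc := (hcompl F' hF').symm
    have hd := hcompl F hF
    let P := Submodule.projectionOnto _ _ hc
    have hP0 : ∀ x, P x = 0 ↔ x ∈ F' := fun x => Submodule.projectionOnto_apply_eq_zero_iff hc
    have hP1 : ∀ x : Submodule.map (conjC V) F, P x = x :=
      fun x => Submodule.projectionOnto_apply_left hc x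
    refine ⟨-(P.comp F.subtype), ?_, ?_⟩
    · intro w
      constructor
      · intro hw
        have hmem : w ∈ F ⊔ Submodule.map (conjC V) F := by
          rw [hd.sup_eq_top]; trivial
        obtain ⟨z, hz, y, hy, rfl⟩ := Submodule.mem_sup.1 hmem
        refine ⟨⟨z, hz⟩, ?_⟩
        have h := (hP0 _).2 hw
        rw [map_add, hP1 ⟨y, hy⟩] at h
        have h' := eq_neg_of_add_eq_zero_right h
        have h2 : y = -((P z : Submodule.map (conjC V) F) : ℂ ⊗[ℝ] V) :=
          congrArg Subtype.val h'
        simpa using h2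
      · rintro ⟨z, rfl⟩
        rw [← hP0, map_add, hP1]
        simp
    · intro ψ hψ
      ext1 z
      have h := (hP0 _).2 ((hψ _).2 ⟨z, rfl⟩)
      rw [map_add, hP1] at h
      simpa using eq_neg_of_add_eq_zero_right h
  · intro φ
    have hbar : ∀ x y : Submodule.map (conjC V) F,
        (LinearMap.BilinForm.baseChange ℂ a) (x : ℂ ⊗[ℝ] V) (y : ℂ ⊗[ℝ] V) = 0 := by
      rintro ⟨_, x, hx, rfl⟩ ⟨_, y, hy, rfl⟩
      rw [baseChange_conj, hF.2.1 x hx y hy, map_zero]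
    have key : ∀ z z' : F,
        (LinearMap.BilinForm.baseChange ℂ a)
          ((z : ℂ ⊗[ℝ] V) + (↑(φ z) : ℂ ⊗[ℝ] V))
          ((z' : ℂ ⊗[ℝ] V) + (↑(φ z') : ℂ ⊗[ℝ] V)) =
        (LinearMap.BilinForm.baseChange ℂ a) (z : ℂ ⊗[ℝ] V) (↑(φ z') : ℂ ⊗[ℝ] V) -
        (LinearMap.BilinForm.baseChange ℂ a) (z' : ℂ ⊗[ℝ] V) (↑(φ z) : ℂ ⊗[ℝ] V) := by
      intro z z'
      rw [map_add, map_add, LinearMap.add_apply, LinearMap.add_apply, hbar, hF.2.1 z z.2 z' z'.2,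
        baseChange_skew a halt (φ z : ℂ ⊗[ℝ] V) (z' : ℂ ⊗[ℝ] V)]
      ring
    simp only [key, sub_eq_zero]

end
end

section
/- Let I ⊂ V be a 1-dimensional subspace with s|I×I = 0. Then for every v ∈ V⁺ there exists x ∈ I with s_ℂ(x⊗1, v) ≠ 0; equivalently, V⁺ is disjoint from the complexification I^⊥_ℂ of I^⊥ = {w ∈ V : s(w,I) = 0}. -/
open TensorProduct Module

noncomputable section

variable {V : Type*} [AddCommGroup V] [Module ℝ V]

/-- The hermitian form `h(v,w) = s_ℂ(v, conj w)` associated to a real symmetric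
bilinear form `s`. -/
def hermOrth (s : LinearMap.BilinForm ℝ V) (v w : ℂ ⊗[ℝ] V) : ℂ :=
  (LinearMap.BilinForm.baseChange ℂ s) v (conjC V w)

/-- The set `V⁺ = {v ∈ V_ℂ : s_ℂ(v,v) = 0, h(v,v) > 0}`. -/
def Vplus (s : LinearMap.BilinForm ℝ V) : Set (ℂ ⊗[ℝ] V) :=
  {v | (LinearMap.BilinForm.baseChange ℂ s) v v = 0 ∧
    ∃ r : ℝ, 0 < r ∧ hermOrth s v v = r}

/-- A real symmetric bilinear form `s` has signature `(p,q)` on the subspace `V₀`: `V₀`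
is an `s`-orthogonal direct sum of a `p`-dimensional subspace on which `s` is positive
definite and a `q`-dimensional subspace on which `s` is negative definite. -/
def RealSig {U : Type*} [AddCommGroup U] [Module ℝ U]
    (s : LinearMap.BilinForm ℝ U) (U₀ : Submodule ℝ U) (p q : ℕ) : Prop :=
  ∃ P N : Submodule ℝ U, P ≤ U₀ ∧ N ≤ U₀ ∧ P ⊓ N = ⊥ ∧ P ⊔ N = U₀ ∧
    Module.finrank ℝ P = p ∧ Module.finrank ℝ N = q ∧
    (∀ v ∈ P, ∀ w ∈ N, s v w = 0) ∧
    (∀ v ∈ P, v ≠ 0 → 0 < s v v) ∧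
    (∀ w ∈ N, w ≠ 0 → s w w < 0)

theorem real_core [FiniteDimensional ℝ V] (n : ℕ)
    (hdim : Module.finrank ℝ V = n + 2)
    (s : LinearMap.BilinForm ℝ V) (hs : ∀ x y, s x y = s y x)
    (N : Submodule ℝ V) (hN : Module.finrank ℝ N = n)
    (hneg : ∀ w ∈ N, w ≠ 0 → s w w < 0)
    (a b x : V) (haa : 0 < s a a) (hbb : s b b = s a a) (hab : s a b = 0)
    (hxx : s x x = 0) (hxa : s x a = 0) (hxb : s x b = 0) : x = 0 := by
  have hq : Module.finrank ℝ (V ⧸ N) = 2 := by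
    have := Submodule.finrank_quotient_add_finrank N
    omega
  let f : (Fin 3 → ℝ) →ₗ[ℝ] V := Fintype.linearCombination ℝ ![a, b, x]
  have hk : LinearMap.ker (N.mkQ ∘ₗ f) ≠ ⊥ :=
    LinearMap.ker_ne_bot_of_finrank_lt (by simp [hq])
  obtain ⟨c, hc, hc0⟩ := Submodule.exists_mem_ne_zero_of_ne_bot hk
  have hfc : f c = c 0 • a + c 1 • b + c 2 • x := by
    simp [f, Fintype.linearCombination_apply, Fin.sum_univ_three]
  have hmem : f c ∈ N := by simpa using hc
  have hval : s (f c) (f c) = (c 0 ^ 2 + c 1 ^ 2) * s a a := by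
    rw [hfc]
    simp [hs b a, hs a x, hs b x, hab, hbb, hxx, hxa, hxb]
    ring
  have hz : f c = 0 := by
    by_contra h
    have := hneg _ hmem h
    rw [hval] at this
    nlinarith [mul_nonneg (add_nonneg (sq_nonneg (c 0)) (sq_nonneg (c 1))) haa.le]
  have h01 : c 0 ^ 2 + c 1 ^ 2 = 0 := by
    rw [hz] at hval
    simp only [map_zero] at hval
    exact (mul_eq_zero.mp hval.symm).resolve_right haa.ne'
  have h0 : c 0 = 0 := by nlinarith [sq_nonneg (c 0), sq_nonneg (c 1)]
  have h1 : c 1 = 0 := by nlinarith [sq_nonneg (c 0), sq_nonneg (c 1)]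
  have h2 : c 2 ≠ 0 := by
    intro h2
    apply hc0
    ext i
    fin_cases i <;> simp [h0, h1, h2]
  rw [hz, h0, h1] at hfc
  simp only [zero_smul, zero_add] at hfc
  exact (smul_eq_zero.mp hfc.symm).resolve_left h2

theorem exists_re_im (v : ℂ ⊗[ℝ] V) :
    ∃ a b : V, v = (1 : ℂ) ⊗ₜ[ℝ] a + Complex.I ⊗ₜ[ℝ] b := by
  induction v using TensorProduct.induction_on with
  | zero => exact ⟨0, 0, by simp⟩
  | tmul z v =>
    refine ⟨z.re • v, z.im • v, ?_⟩
    rw [← TensorProduct.smul_tmul, ← TensorProduct.smul_tmul, ← TensorProduct.add_tmul]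
    congr 1
    apply Complex.ext <;> simp
  | add x y hx hy =>
    obtain ⟨a, b, rfl⟩ := hx
    obtain ⟨c, d, rfl⟩ := hy
    refine ⟨a + c, b + d, ?_⟩
    simp only [TensorProduct.tmul_add]
    abel

/-- let `I ⊂ V` be a 1-dimensional subspace with `s|I×I = 0`.  Then for
every `v ∈ V⁺` there exists `x ∈ I` with `s_ℂ(x⊗1, v) ≠ 0`; equivalently, `V⁺` is
disjoint from the complexification `I^⊥_ℂ` of `I^⊥`. -/
theorem Vplus_disjoint_from_Iperp
    [FiniteDimensional ℝ V] (n : ℕ) (hn : 1 ≤ n)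
    (hdim : Module.finrank ℝ V = n + 2)
    (s : LinearMap.BilinForm ℝ V) (hsymm : LinearMap.IsSymm s)
    (hnd : LinearMap.BilinForm.Nondegenerate s)
    (hsig : RealSig s ⊤ 2 n)
    (I : Submodule ℝ V) (hIdim : Module.finrank ℝ I = 1)
    (hIiso : ∀ x ∈ I, ∀ y ∈ I, s x y = 0)
    (Iperp : Submodule ℝ V) (hIperp : ∀ w : V, w ∈ Iperp ↔ ∀ x ∈ I, s w x = 0) :
    ∀ v ∈ Vplus s,
      (∃ x ∈ I, (LinearMap.BilinForm.baseChange ℂ s) ((1 : ℂ) ⊗ₜ[ℝ] x) v ≠ 0) ∧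
      v ∉ Iperp.baseChange ℂ := by
  intro v hv
  have key : ∃ x ∈ I, (LinearMap.BilinForm.baseChange ℂ s) ((1 : ℂ) ⊗ₜ[ℝ] x) v ≠ 0 := by
    by_contra! hcon
    obtain ⟨P, N, -, -, -, -, -, hN, -, -, hneg⟩ := hsig
    have hs : ∀ x y, s x y = s y x := fun x y => by simpa using hsymm.eq x y
    obtain ⟨x, hx0⟩ : ∃ x : I, x ≠ 0 := by
      have : Nontrivial I := Module.nontrivial_of_finrank_pos (R := ℝ) (by omega)
      exact exists_ne 0
    obtain ⟨hv1, r, hr, hv2⟩ := hv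
    obtain ⟨a, b, rfl⟩ := exists_re_im v
    have hx := hcon x x.2
    have hconj : conjC V ((1 : ℂ) ⊗ₜ[ℝ] a + Complex.I ⊗ₜ[ℝ] b)
        = (1 : ℂ) ⊗ₜ[ℝ] a + (-Complex.I) ⊗ₜ[ℝ] b := by
      simp [conjC]
    unfold hermOrth at hv2
    rw [hconj] at hv2
    simp only [map_add, LinearMap.add_apply, LinearMap.BilinForm.baseChange_tmul] at hv1 hv2 hx
    have e1 := congrArg Complex.re hv1
    have e2 := congrArg Complex.im hv1
    have e3 := congrArg Complex.re hv2
    have e5 := congrArg Complex.re hx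
    have e6 := congrArg Complex.im hx
    simp [hs b a] at e1 e2 e3 e5 e6
    apply hx0
    apply Subtype.ext
    exact real_core n hdim s hs N hN hneg a b x (by linarith) (by linarith) (by linarith)
      (hIiso x x.2 x x.2) e5 e6
  refine ⟨key, fun hmem => ?_⟩
  obtain ⟨x, hx, hne⟩ := key
  apply hne
  have hle : Iperp.baseChange ℂ ≤
      LinearMap.ker ((LinearMap.BilinForm.baseChange ℂ s) ((1 : ℂ) ⊗ₜ[ℝ] x)) := by
    rw [Submodule.baseChange_eq_span, Submodule.span_le]
    rintro _ ⟨w, hw, rfl⟩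
    have h1 : s w x = 0 := (hIperp w).1 hw x hx
    have h2 : s x w = 0 := by
      rw [← h1]; simpa using hsymm.eq x w
    simp [h2]
  exact hle hmem

end
end
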